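/- Let X and Y be finite-dimensional subspaces of a real inner product space H with dim X = dim Y < ∞. Then dist(X, Y) = dist(Y, X), where dist(X,Y) = sup_{u∈X, ||u||=1} inf_{v∈Y} ||u − v||. -/

import Mathlib

/-- Distance from subspace `X` to subspace `Y`: supremum over unit vectors of `X` of the
distance to `Y`. -/
noncomputable def distSub {H : Type*} [NormedAddCommGroup H] [InnerProductSpace ℝ H]
    (X Y : Submodule ℝ H) : ℝ :=
  ⨆ u : {u : H // u ∈ X ∧ ‖u‖ = 1}, ⨅ v : Y, ‖u.1 - (v : H)‖

theorem distSub_le_aux {H : Type*} [NormedAddCommGroup H] [InnerProductSpace ℝ H]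
    (X Y : Submodule ℝ H) [FiniteDimensional ℝ X] [FiniteDimensional ℝ Y]
    (hdim : Module.finrank ℝ X = Module.finrank ℝ Y) :
    distSub Y X ≤ distSub X Y := by
  have bddI : ∀ (Z : Submodule ℝ H) (u : H),
      BddBelow (Set.range fun v : Z => ‖u - (v : H)‖) := by
    intro Z u
    refine ⟨0, ?_⟩
    rintro _ ⟨v, rfl⟩
    exact norm_nonneg _
  have le1 : ∀ (Z : Submodule ℝ H) (u : H), ‖u‖ = 1 → (⨅ v : Z, ‖u - (v : H)‖) ≤ 1 := by
    intro Z u hu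
    refine (ciInf_le (bddI Z u) 0).trans ?_
    simp [hu]
  have bddS : BddAbove (Set.range fun u : {u : H // u ∈ X ∧ ‖u‖ = 1} =>
      ⨅ v : Y, ‖u.1 - (v : H)‖) := by
    refine ⟨1, ?_⟩
    rintro _ ⟨u, rfl⟩
    exact le1 Y u.1 u.2.2
  have d0 : 0 ≤ distSub X Y :=
    Real.iSup_nonneg fun u => Real.iInf_nonneg fun v => norm_nonneg _
  have key : ∀ u ∈ X, ‖u‖ = 1 → ‖u - Y.starProjection u‖ ≤ distSub X Y := by
    intro u hu h1
    rw [Y.starProjection_minimal u]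
    exact le_ciSup bddS ⟨u, hu, h1⟩
  rcases le_or_gt 1 (distSub X Y) with hd | hd
  · exact Real.iSup_le (fun u => (le1 X u.1 u.2.2).trans hd) d0
  set d := distSub X Y with hdd
  have key2 : ∀ u ∈ X, ‖u - Y.starProjection u‖ ≤ d * ‖u‖ := by
    intro u hu
    by_cases h0 : u = 0
    · simp [h0]
    have hn : 0 < ‖u‖ := norm_pos_iff.2 h0
    have := key (‖u‖⁻¹ • u) (X.smul_mem _ hu) (by
      rw [norm_smul, norm_inv, norm_norm, inv_mul_cancel₀ hn.ne'])
    rw [map_smul, ← smul_sub, norm_smul, norm_inv, norm_norm, inv_mul_le_iff₀ hn] at this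
    linarith
  let f : X →ₗ[ℝ] Y := (Y.orthogonalProjectionOnto : H →ₗ[ℝ] Y) ∘ₗ X.subtype
  have hf : ∀ x : X, ((f x : Y) : H) = Y.starProjection (x : H) := fun x => rfl
  have finj : Function.Injective f := by
    rw [injective_iff_map_eq_zero]
    intro x hx
    have h1 := key2 x x.2
    rw [← hf, hx] at h1
    have h2 : ‖(x : H)‖ ≤ d * ‖(x : H)‖ := by simpa using h1
    have h3 : ‖(x : H)‖ = 0 := by nlinarith [norm_nonneg (x : H)]
    exact Subtype.ext (norm_eq_zero.1 h3)
  have fsurj : Function.Surjective f :=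
    (LinearMap.injective_iff_surjective_of_finrank_eq_finrank hdim).1 finj
  refine Real.iSup_le ?_ d0
  rintro ⟨y, hy, hy1⟩
  obtain ⟨x, hx⟩ := fsurj ⟨y, hy⟩
  have hx' : Y.starProjection (x : H) = y := by rw [← hf, hx]
  have horth : inner ℝ ((x : H) - y) y = 0 := by
    rw [← hx']
    exact Y.starProjection_inner_eq_zero _ _ (by rw [hx']; exact hy)
  have hin : inner ℝ (x : H) y = 1 := by
    rw [inner_sub_left, real_inner_self_eq_norm_sq, hy1] at horth
    linarith
  have hk := key2 x x.2
  rw [hx'] at hk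
  have hsq : ‖(x : H) - y‖ ^ 2 = ‖(x : H)‖ ^ 2 - 1 := by
    rw [norm_sub_sq_real, hin, hy1]; ring
  have hk2 : ‖(x : H)‖ ^ 2 - 1 ≤ d ^ 2 * ‖(x : H)‖ ^ 2 := by
    rw [← hsq, ← mul_pow]
    exact pow_le_pow_left₀ (norm_nonneg _) hk 2
  have hpos : 0 < ‖(x : H)‖ ^ 2 := by nlinarith [sq_nonneg ‖(x : H) - y‖]
  refine (ciInf_le (bddI X y) ((‖(x : H)‖ ^ 2)⁻¹ • x)).trans ?_
  refine (sq_le_sq₀ (norm_nonneg _) d0).1 ?_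
  have : ‖y - (((‖(x : H)‖ ^ 2)⁻¹ • x : X) : H)‖ ^ 2 = 1 - (‖(x : H)‖ ^ 2)⁻¹ := by
    rw [Submodule.coe_smul, norm_sub_sq_real, inner_smul_right, real_inner_comm, hin, hy1,
      norm_smul, mul_pow, norm_inv, norm_pow, norm_norm]
    field_simp
    ring
  rw [this]
  have h4 : 1 - (‖(x : H)‖ ^ 2)⁻¹ = (‖(x : H)‖ ^ 2 - 1) / ‖(x : H)‖ ^ 2 := by
    rw [sub_div, div_self hpos.ne', one_div]
  rw [h4, div_le_iff₀ hpos]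
  exact hk2

theorem stmt2 {H : Type*} [NormedAddCommGroup H] [InnerProductSpace ℝ H]
    (X Y : Submodule ℝ H) [FiniteDimensional ℝ X] [FiniteDimensional ℝ Y]
    (hdim : Module.finrank ℝ X = Module.finrank ℝ Y) :
    distSub X Y = distSub Y X := by
  exact le_antisymm (distSub_le_aux Y X hdim.symm) (distSub_le_aux X Y hdim)
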